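/- Let k ≥ 1 be an integer and let p ∈ ℤ[a,b] be monic as a polynomial in b over ℤ[a], irreducible in ℚ[a,b], dividing f_{k,2} but not dividing f_{k,1}·f_{k−1,2} (so p is the polynomial h_{k,2}). Then p is an even polynomial: p(−a,−b) = p(a,b). -/

import Mathlib

/-!
Write `k = n + 1`. Factoring `f(z) - f(w)` gives `f_{k,2} = f_{k-1,2} · quo n · cof n`, where
`quo n` divides `f_{k,1}` and `cof n = 1 + (P_k - P_{k-1}) (P_{k+1} + P_k + P_{k-1})`
(`fkn_two`, `fkn_one`). So the prime `p` divides `cof n`, which is even because every `P_m` is odd;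
hence `σ(p)` divides `cof n` as well. The idea is an Eisenstein-type argument at the prime `3`
showing that there is no room for two distinct such factors.

Modulo `3` the map `f` is `z ↦ (z - a)³ + b`, which makes `cof n` congruent to a power of
`(b - a)² + 1` (`red_cof`). After the specialization `a = 1`, this quadratic stays irreducible
over `𝔽₃`, so every nontrivial monic factor of `cof n` has even degree in `b`, and its value at
`(a, b) = (1, 1 + i)` is divisible by `3` in `ℤ[i]` (`factor_aux`). If `σ(p) ≠ p`, then `p · σ(p)`
divides `cof n`, whose value must then be divisible by `9`. At this point the orbit of `a` is
`1, 1 + i, -2, 1 + i, -2, …`, so the value can be computed exactly.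

* For even `k` it is `3 - 6i`, which `9` does not divide.
* For odd `k` the factor `h_{0,2} = (b - a)(b + 2a) + 1` of `f_{k-1,2}` also divides `cof n`, and
  `p · σ(p)` divides the quotient. The value of `h_{0,2}` is `3i`. For `k ≥ 3` the value of `cof n`
  is `-9`, which would have to be divisible by `27`. For `k = 1` the quotient is `(b - a)² + 1`,
  of degree `2`, too small for two factors of positive even degree.
-/

open Polynomial

/-- We regard `ℤ[a,b]` as `(ℤ[a])[b]`; the variable `a` is `C X` and `b` is `X`.
`P m = f^m(a)` for `f(z) = z³ - 3a²z + 2a³ + b`. -/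
noncomputable def P : ℕ → Polynomial (Polynomial ℤ)
  | 0 => C X
  | m + 1 => (P m) ^ 3 - 3 * (C X) ^ 2 * (P m) + 2 * (C X) ^ 3 + X

/-- `f_{k,n} = f^{k+n}(a) - f^k(a)`. -/
noncomputable def fkn (k n : ℕ) : Polynomial (Polynomial ℤ) := P (k + n) - P k

/-- The substitution `(a,b) ↦ (-a,-b)` on `ℤ[a,b] = (ℤ[a])[b]`. -/
noncomputable def sigma (p : Polynomial (Polynomial ℤ)) : Polynomial (Polynomial ℤ) :=
  (p.map (Polynomial.aeval (-X : Polynomial ℤ)).toRingHom).comp (-X)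

/-! ### The even/odd symmetry -/

/-- The substitution `sigma`, bundled as a ring homomorphism. -/
noncomputable def sigmaHom : Polynomial (Polynomial ℤ) →+* Polynomial (Polynomial ℤ) :=
  (Polynomial.compRingHom (-X)).comp
    (Polynomial.mapRingHom (Polynomial.aeval (-X : Polynomial ℤ)).toRingHom)

theorem sigmaHom_apply (p : Polynomial (Polynomial ℤ)) : sigmaHom p = sigma p := rfl

theorem sigmaHom_a : sigmaHom (C X) = -(C X : Polynomial (Polynomial ℤ)) := by
  simp [sigmaHom]

theorem sigmaHom_b : sigmaHom X = -X := by
  simp [sigmaHom]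

theorem sigmaHom_P (m : ℕ) : sigmaHom (P m) = -P m := by
  induction m with
  | zero => exact sigmaHom_a
  | succ m ih =>
    simp only [P, map_add, map_sub, map_mul, map_pow, ih, sigmaHom_a, sigmaHom_b, map_ofNat]
    ring

/-! ### Factorization of `f_{k,2}` -/

/-- For `k = n + 1`, the cofactor of `f_{k,2}` left over once `f_{k-1,2}` and the quotient
`f_{k,1} / f_{k-1,1}` have been divided out. -/
noncomputable def cof (n : ℕ) : Polynomial (Polynomial ℤ) :=
  1 + (P (n + 1) - P n) * (P (n + 2) + P (n + 1) + P n)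

/-- The quotient `f_{k,1} / f_{k-1,1}` for `k = n + 1`. -/
noncomputable def quo (n : ℕ) : Polynomial (Polynomial ℤ) :=
  P (n + 1) ^ 2 + P (n + 1) * P n + P n ^ 2 - 3 * (C X) ^ 2

theorem P_succ (m : ℕ) :
    P (m + 1) = (P m) ^ 3 - 3 * (C X) ^ 2 * (P m) + 2 * (C X) ^ 3 + X := rfl

theorem fkn_one (n : ℕ) : fkn (n + 1) 1 = (P (n + 1) - P n) * quo n := by
  simp only [fkn, quo]
  rw [P_succ (n + 1)]
  nth_rewrite 3 [P_succ n]
  ring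

/-- Replacing `P (n + 2)` by `P (n + 1)` in the cofactor `x² + xy + y² - 3a²` of `f_{k-1,2}` in
`f_{k,2}` gives `quo n`, and the difference `P (n + 2) - P (n + 1)` is itself a multiple of
`quo n`. -/
theorem fkn_two (n : ℕ) : fkn (n + 1) 2 = fkn n 2 * (quo n * cof n) := by
  have h2 : P (n + 2) = P (n + 1) + (P (n + 1) - P n) * quo n := by
    have := fkn_one n
    simp only [fkn] at this
    linear_combination this
  have h3 : P (n + 3) - P (n + 1) = (P (n + 2) - P n) *
      (P (n + 2) ^ 2 + P (n + 2) * P n + P n ^ 2 - 3 * (C X) ^ 2) := by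
    rw [P_succ (n + 2), P_succ n]; ring
  rw [fkn, fkn, show n + 1 + 2 = n + 3 from rfl, h3]
  simp only [cof]
  have : P (n + 2) ^ 2 + P (n + 2) * P n + P n ^ 2 - 3 * (C X) ^ 2 =
    quo n + (P (n + 2) - P (n + 1)) * (P (n + 2) + P (n + 1) + P n) := by
      simp only [quo]; ring
  rw [this]
  linear_combination (P (n + 2) - P n) * (P (n + 2) + P (n + 1) + P n) * h2

/-! ### The spurious factor `h_{0,2}` for odd `k` -/

/-- The polynomial `h_{0,2} = (P₂ - a) / (b - a)`. -/
noncomputable def h02 : Polynomial (Polynomial ℤ) := (X - C X) * (X + 2 * C X) + 1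

theorem h02_dvd_even (j : ℕ) : h02 ∣ P (2 * j) - C X := by
  induction j with
  | zero => simp [P]
  | succ j ih =>
    obtain ⟨t, ht⟩ := ih
    have h0 : P (2 * j) = C X + h02 * t := by linear_combination ht
    have h1 : P (2 * j + 1) = X + h02 * (h02 * t ^ 2 * (h02 * t + 3 * C X)) := by
      rw [P_succ, h0]; ring
    change h02 ∣ P (2 * j + 1 + 1) - C X
    generalize h02 * t ^ 2 * (h02 * t + 3 * C X) = s at h1
    rw [P_succ, h1]
    refine ⟨(X - C X) + 3 * X ^ 2 * s + 3 * X * h02 * s ^ 2 + h02 ^ 2 * s ^ 3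
      - 3 * (C X) ^ 2 * s, ?_⟩
    rw [h02]; ring

theorem h02_dvd_odd (j : ℕ) : h02 ∣ P (2 * j + 1) - X := by
  obtain ⟨t, ht⟩ := h02_dvd_even j
  have h0 : P (2 * j) = C X + h02 * t := by linear_combination ht
  exact ⟨h02 * t ^ 2 * (h02 * t + 3 * C X), by rw [P_succ, h0]; ring⟩

theorem h02_dvd_cof (j : ℕ) : h02 ∣ cof (2 * j) := by
  obtain ⟨r, hr⟩ := h02_dvd_even j
  obtain ⟨s, hs⟩ := h02_dvd_odd j
  obtain ⟨t, ht⟩ := h02_dvd_even (j + 1)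
  rw [sub_eq_iff_eq_add] at hr hs ht
  change P (2 * j + 2) = _ at ht
  rw [cof, hr, hs, ht]
  refine ⟨1 + (s - r) * (X + 2 * C X + h02 * (t + s + r)) + (X - C X) * (t + s + r), ?_⟩
  have : h02 = (X - C X) * (X + 2 * C X) + 1 := rfl
  linear_combination -this

theorem h02_dvd_fkn (j : ℕ) : h02 ∣ fkn (2 * j) 2 := by
  have := dvd_sub (h02_dvd_even (j + 1)) (h02_dvd_even j)
  simpa [fkn, mul_add] using this

theorem sigmaHom_h02 : sigmaHom h02 = h02 := by
  simp only [h02, map_add, map_sub, map_mul, sigmaHom_a, sigmaHom_b, map_ofNat, map_one]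
  ring

theorem sigmaHom_cof (n : ℕ) : sigmaHom (cof n) = cof n := by
  simp only [cof, map_add, map_sub, map_mul, sigmaHom_P, map_one]
  ring

/-! ### Values at `(a, b) = (1, 1 + i)` -/

/-- Specialization `a = 1`, as a map `ℤ[a][b] → ℤ[b]`. -/
noncomputable def spec : Polynomial (Polynomial ℤ) →+* Polynomial ℤ :=
  Polynomial.mapRingHom (Polynomial.evalRingHom 1)

/-- Evaluation at `a = 1`, `b = 1 + i`, with values in `ℤ[i]`. -/
noncomputable def ev : Polynomial (Polynomial ℤ) →+* GaussianInt :=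
  (Polynomial.eval₂RingHom (Int.castRingHom GaussianInt) ⟨1, 1⟩).comp spec

/-- Specialization `a = 1` followed by reduction modulo `3`. -/
noncomputable def red : Polynomial (Polynomial ℤ) →+* Polynomial (ZMod 3) :=
  (Polynomial.mapRingHom (Int.castRingHom (ZMod 3))).comp spec

theorem ev_a : ev (C X) = 1 := by simp [ev, spec]
theorem ev_b : ev X = ⟨1, 1⟩ := by simp [ev, spec]
theorem red_a : red (C X) = 1 := by simp [red, spec]
theorem red_b : red X = X := by simp [red, spec]

theorem ev_P_succ (m : ℕ) :
    ev (P (m + 1)) = (ev (P m)) ^ 3 - 3 * (ev (P m)) + 2 + ⟨1, 1⟩ := by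
  simp only [P, map_add, map_sub, map_mul, map_pow, ev_a, ev_b, map_ofNat]
  ring

/-- The critical value `1 + i` is mapped to the cocritical point `-2a = -2`, which `f` maps back to
the critical value. -/
theorem ev_P (j : ℕ) : ev (P (2 * j + 1)) = ⟨1, 1⟩ ∧ ev (P (2 * j + 2)) = -2 := by
  have key : ∀ m, ev (P m) = ⟨1, 1⟩ → ev (P (m + 1)) = -2 := by
    intro m hm
    rw [ev_P_succ, hm]; decide
  induction j with
  | zero =>
    have h : ev (P (2 * 0 + 1)) = ⟨1, 1⟩ := by
      rw [ev_P_succ]; simp only [P, ev_a]; decide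
    exact ⟨h, key _ h⟩
  | succ j ih =>
    have h : ev (P (2 * (j + 1) + 1)) = ⟨1, 1⟩ := by
      rw [ev_P_succ]
      change ev (P (2 * j + 2)) ^ 3 - 3 * ev (P (2 * j + 2)) + 2 + _ = _
      rw [ih.2]; decide
    exact ⟨h, key _ h⟩

theorem ev_cof_odd (j : ℕ) : ev (cof (2 * j + 1)) = ⟨3, -6⟩ := by
  have h1 := (ev_P j).1
  have h2 := (ev_P j).2
  have h3 := (ev_P (j + 1)).1
  simp only [cof, map_add, map_sub, map_mul, map_one]
  change 1 + (ev (P (2 * j + 2)) - _) * (ev (P (2 * (j + 1) + 1)) + ev (P (2 * j + 2)) + _) = _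
  rw [h1, h2, h3]; decide

theorem ev_cof_even (j : ℕ) : ev (cof (2 * j + 2)) = -9 := by
  have h1 := (ev_P j).2
  have h2 := (ev_P (j + 1)).1
  have h3 := (ev_P (j + 1)).2
  simp only [cof, map_add, map_sub, map_mul, map_one]
  change 1 + (ev (P (2 * (j + 1) + 1)) - _) *
    (ev (P (2 * (j + 1) + 2)) + ev (P (2 * (j + 1) + 1)) + _) = _
  rw [h1, h2, h3]; decide

theorem ev_h02 : ev h02 = 3 * ⟨0, 1⟩ := by
  simp only [h02, map_add, map_sub, map_mul, ev_a, ev_b, map_ofNat, map_one]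
  decide

/-! ### Reduction modulo `3` -/

theorem three_eq_zero : (3 : Polynomial (ZMod 3)) = 0 :=
  CharP.cast_eq_zero (Polynomial (ZMod 3)) 3

/-- Modulo `3` the map `f` is `z ↦ (z - a)³ + b`, so successive differences of the orbit are
obtained by applying Frobenius. -/
theorem red_P_sub (m : ℕ) : red (P (m + 1)) - red (P m) = (X - 1) ^ 3 ^ m := by
  induction m with
  | zero =>
    simp only [P, map_add, map_sub, map_mul, map_pow, red_a, red_b, map_ofNat]
    ring
  | succ m ih =>
    rw [pow_succ, pow_mul, ← ih, P_succ (m + 1)]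
    nth_rewrite 3 [P_succ m]
    simp only [map_add, map_sub, map_mul, map_pow, red_a, red_b, map_ofNat]
    linear_combination (-(red (P (m + 1))) + red (P m) + (red (P (m + 1))) ^ 2 * red (P m)
      - red (P (m + 1)) * red (P m) ^ 2) * three_eq_zero

theorem red_cof (n : ℕ) : red (cof n) = ((X - 1) ^ 2 + 1) ^ (2 * 3 ^ n) := by
  have h0 := red_P_sub n
  have h1 := red_P_sub (n + 1)
  rw [mul_comm, pow_mul, add_pow_char_pow, one_pow, ← pow_mul, mul_comm 2, pow_mul]
  rw [pow_succ 3 n, pow_mul] at h1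
  generalize (X - 1 : Polynomial (ZMod 3)) ^ 3 ^ n = e at h0 h1
  have hz : red (P (n + 1)) = red (P n) + e := by linear_combination h0
  have hx : red (P (n + 2)) = red (P n) + e + e ^ 3 := by linear_combination h1 + hz
  simp only [cof, map_add, map_sub, map_mul, map_one, hz, hx]
  linear_combination (e * red (P n)) * three_eq_zero

/-- Expanded form of `(b - 1)² + 1`, for the degree computation. -/
theorem quad_eq : ((X - 1) ^ 2 + 1 : Polynomial (ZMod 3)) = X ^ 2 + C 1 * X + C 2 := by
  have h : (C 2 : Polynomial (ZMod 3)) = 2 := rfl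
  rw [C_1, h]
  linear_combination -X * three_eq_zero

theorem quad_natDegree : ((X - 1) ^ 2 + 1 : Polynomial (ZMod 3)).natDegree = 2 := by
  rw [quad_eq]; compute_degree!

theorem quad_irreducible : Irreducible ((X - 1) ^ 2 + 1 : Polynomial (ZMod 3)) := by
  refine (Polynomial.irreducible_iff_roots_eq_zero_of_degree_le_three ?_ ?_).2 ?_
  · rw [quad_natDegree]
  · rw [quad_natDegree]; norm_num
  · refine Multiset.eq_zero_of_forall_notMem fun x hx => ?_
    have := (Polynomial.mem_roots'.1 hx).2
    simp only [IsRoot, eval_add, eval_pow, eval_sub, eval_X, eval_one] at this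
    clear hx
    revert x; decide

/-- After setting `a = 1`, a monic factor `q ≠ 1` of `cof n` is modulo `3` a positive power of the
irreducible `(b - 1)² + 1`,
a polynomial which vanishes at `b = 1 + i`. -/
theorem factor_aux (n : ℕ) (q : Polynomial (Polynomial ℤ)) (hq : q.Monic) (hq1 : q ≠ 1)
    (hd : q ∣ cof n) : (3 : GaussianInt) ∣ ev q ∧ Even q.natDegree := by
  have hsm : (spec q).Monic := hq.map _
  have hrm : (red q).Monic := hsm.map _
  have hdeg : (red q).natDegree = q.natDegree :=
    (hsm.natDegree_map _).trans (hq.natDegree_map _)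
  have hdv : red q ∣ ((X - 1) ^ 2 + 1) ^ (2 * 3 ^ n) := red_cof n ▸ map_dvd red hd
  obtain ⟨j, -, hj⟩ := (dvd_prime_pow quad_irreducible.prime _).1 hdv
  have hjd : q.natDegree = j * 2 := by
    rw [← hdeg, natDegree_eq_of_degree_eq (degree_eq_degree_of_associated hj), natDegree_pow,
      quad_natDegree]
  refine ⟨?_, ⟨j, by omega⟩⟩
  have hj0 : j ≠ 0 := by
    rintro rfl
    exact hq1 (hq.natDegree_eq_zero.1 (by omega))
  obtain ⟨s, hs⟩ := (dvd_pow_self _ hj0).trans hj.symm.dvd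
  obtain ⟨s, rfl⟩ := Polynomial.map_surjective (Int.castRingHom (ZMod 3))
    (ZMod.ringHom_surjective _) s
  have h3 : C (3 : ℤ) ∣ spec q - ((X - 1) ^ 2 + 1) * s := by
    rw [C_dvd_iff_dvd_coeff]
    intro i
    have : (spec q - ((X - 1) ^ 2 + 1) * s).map (Int.castRingHom (ZMod 3)) = 0 := by
      rw [Polynomial.map_sub, Polynomial.map_mul]
      change red q - _ = 0
      rw [hs]; simp
    have := congrArg (fun p => p.coeff i) this
    simp only [coeff_map, coeff_zero] at this
    exact (ZMod.intCast_zmod_eq_zero_iff_dvd _ 3).1 this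
  obtain ⟨t, ht⟩ := h3
  rw [sub_eq_iff_eq_add] at ht
  have hi : ((⟨1, 1⟩ : GaussianInt) - 1) ^ 2 + 1 = 0 := by decide
  refine ⟨Polynomial.eval₂RingHom (Int.castRingHom GaussianInt) ⟨1, 1⟩ t, ?_⟩
  change Polynomial.eval₂RingHom (Int.castRingHom GaussianInt) ⟨1, 1⟩ (spec q) = _
  rw [ht, map_add, map_mul, map_mul, map_add, map_pow, map_sub, map_one]
  simp [hi]

/-! ### Evenness -/

/-- If `H` is even and divisible by the prime `p`, then `p` is even unless the product of `p` and
the monic multiple `±σ(p)` divides `H`. -/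
theorem even_of_not_mul_dvd (n : ℕ) (p H : Polynomial (Polynomial ℤ)) (hmon : p.Monic)
    (hp : Prime p) (hH : sigmaHom H = H) (hpH : p ∣ H) (hHn : H ∣ cof n)
    (hno : ∀ r : Polynomial (Polynomial ℤ), r.Monic → r.natDegree = p.natDegree → r ≠ 1 →
      r ∣ H → ¬ p * r ∣ H) : sigma p = p := by
  have hp1 : p ≠ 1 := fun h => hp.not_isUnit (h ▸ isUnit_one)
  have hev := (factor_aux n p hmon hp1 (hpH.trans hHn)).2
  set q := p.map (Polynomial.aeval (-X : Polynomial ℤ)).toRingHom with hq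
  have hqm : q.Monic := hmon.map _
  have hqd : q.natDegree = p.natDegree := hmon.natDegree_map _
  have hsm : (sigma p).Monic := by
    have := hqm.neg_one_pow_natDegree_mul_comp_neg_X
    rwa [hqd, hev.neg_one_pow, one_mul] at this
  have hsd : (sigma p).natDegree = p.natDegree := by
    rw [sigma, ← hq, natDegree_comp, hqd, natDegree_neg, natDegree_X, mul_one]
  have hs1 : sigma p ≠ 1 := by
    intro h
    rw [h, natDegree_one] at hsd
    exact hp1 (hmon.natDegree_eq_zero.1 hsd.symm)
  have hsH : sigma p ∣ H := by
    rw [← sigmaHom_apply, ← hH]; exact map_dvd sigmaHom hpH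
  obtain ⟨t, ht⟩ := hsH
  rcases hp.dvd_or_dvd (ht ▸ hpH) with h | h
  · exact (eq_of_monic_of_dvd_of_natDegree_le hmon hsm h hsd.le)
  · exact absurd (by rw [ht, mul_comm]; exact mul_dvd_mul_left _ h) (hno _ hsm hsd hs1 ⟨t, ht⟩)

theorem nine_dvd (n : ℕ) (p r H : Polynomial (Polynomial ℤ)) (hp : p.Monic) (hr : r.Monic)
    (hp1 : p ≠ 1) (hr1 : r ≠ 1) (hpH : p ∣ H) (hrH : r ∣ H) (hHn : H ∣ cof n)
    (h : p * r ∣ H) : (9 : GaussianInt) ∣ ev H := by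
  have h1 := (factor_aux n p hp hp1 (hpH.trans hHn)).1
  have h2 := (factor_aux n r hr hr1 (hrH.trans hHn)).1
  have h3 := (mul_dvd_mul h1 h2).trans (map_mul ev p r ▸ map_dvd ev h)
  norm_num at h3
  exact h3

/-- The polynomial `h_{k,2}` is even. -/
theorem stmt16 (k : ℕ) (hk : 1 ≤ k) (p : Polynomial (Polynomial ℤ))
    (hmon : p.Monic)
    (hirr : Irreducible (p.map (Polynomial.mapRingHom (Int.castRingHom ℚ))))
    (hdvd : p ∣ fkn k 2)
    (hndvd : ¬ p ∣ fkn k 1 * fkn (k - 1) 2) :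
    sigma p = p := by
  obtain ⟨n, rfl⟩ : ∃ n, k = n + 1 := ⟨k - 1, by omega⟩
  have hprime : Prime p :=
    (hmon.irreducible_of_irreducible_map
      (Polynomial.mapRingHom (Int.castRingHom ℚ)) p hirr).prime
  have hp1 : p ≠ 1 := fun h => hprime.not_isUnit (h ▸ isUnit_one)
  rw [Nat.add_sub_cancel, fkn_one] at hndvd
  rw [fkn_two] at hdvd
  have hA : ¬ p ∣ fkn n 2 := fun h => hndvd (dvd_mul_of_dvd_right h _)
  have hB : ¬ p ∣ quo n := fun h => hndvd (dvd_mul_of_dvd_left (dvd_mul_of_dvd_right h _) _)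
  have hC : p ∣ cof n :=
    ((hprime.dvd_or_dvd ((hprime.dvd_or_dvd hdvd).resolve_left hA))).resolve_left hB
  rcases Nat.even_or_odd' n with ⟨j, rfl | rfl⟩
  · -- Here `h_{0,2}` is a spurious factor of `cof n`, which has to be divided out first.
    obtain ⟨H, hH⟩ := h02_dvd_cof j
    have hD : ¬ p ∣ h02 := fun h => hA (h.trans (h02_dvd_fkn j))
    have hpH : p ∣ H := (hprime.dvd_or_dvd (hH ▸ hC)).resolve_left hD
    have h0 : h02 ≠ 0 := by
      intro h
      have := ev_h02
      rw [h, map_zero] at this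
      revert this; decide
    have hHs : sigmaHom H = H := by
      have := sigmaHom_cof (2 * j)
      rw [hH, map_mul, sigmaHom_h02] at this
      exact mul_left_cancel₀ h0 this
    have hHn : H ∣ cof (2 * j) := hH ▸ dvd_mul_left _ _
    refine even_of_not_mul_dvd (2 * j) p H hmon hprime hHs hpH hHn ?_
    intro r hr hrd hr1 hrH hmul
    rcases j with _ | j
    · -- For `k = 1` one has `H = (b - a)² + 1`, too small to contain two factors of even degree.
      have hHe : H = (X - C X) ^ 2 + 1 := by
        refine mul_left_cancel₀ h0 (hH.symm.trans ?_)
        simp only [cof, h02, P]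
        ring
      obtain ⟨d, hd⟩ := (factor_aux _ p hmon hp1 hC).2
      have hd0 : p.natDegree ≠ 0 := fun h => hp1 (hmon.natDegree_eq_zero.1 h)
      have hHd : H.natDegree = 2 := by
        rw [hHe]; compute_degree!
      have hH0 : H ≠ 0 := by
        rintro rfl; simp at hHd
      have := natDegree_le_of_dvd hmul hH0
      rw [hmon.natDegree_mul hr] at this
      omega
    · obtain ⟨t, ht⟩ := nine_dvd _ p r H hmon hr hp1 hr1 hpH hrH hHn hmul
      have := ev_cof_even j
      change ev (cof (2 * (j + 1))) = -9 at this
      rw [hH, map_mul, ev_h02, ht] at this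
      have h27 : ((27 : ℤ) : GaussianInt) ∣ -9 := ⟨⟨0, 1⟩ * t, by rw [← this]; push_cast; ring⟩
      rw [Zsqrtd.intCast_dvd] at h27
      revert h27; decide
  · refine even_of_not_mul_dvd _ p _ hmon hprime (sigmaHom_cof _) hC dvd_rfl ?_
    intro r hr hrd hr1 hrH hmul
    have h9 : ((9 : ℤ) : GaussianInt) ∣ _ :=
      nine_dvd _ p r _ hmon hr hp1 hr1 hC hrH dvd_rfl hmul
    rw [ev_cof_odd, Zsqrtd.intCast_dvd] at h9
    revert h9; decide
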